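/- arXiv:2410.08902 — 4 statements merged into one kernel-verified Lean document; each statement's English description precedes it below -/
import Mathlib

section
/- Let G be a residually finite group and let N be a finite normal subgroup of G. Then the quotient group G/N is residually finite. -/
/-- A group is residually finite if every nontrivial element is excluded by some
finite-index normal subgroup. -/
def ResiduallyFinite (G : Type*) [Group G] : Prop :=
  ∀ g : G, g ≠ 1 → ∃ N : Subgroup G, N.Normal ∧ N.FiniteIndex ∧ g ∉ N

/-!
The fibre of the quotient map over a nontrivial element is a coset of the finite kernel, hence a
finite set missing `1`. A single finite-index normal subgroup of the source avoids that whole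
fibre, and its image then avoids the given element.
-/

namespace ResiduallyFinite

variable {G H : Type*} [Group G] [Group H]

theorem exists_normal_finiteIndex_disjoint (hG : ResiduallyFinite G) {s : Set G} (hs : s.Finite)
    (h_one : 1 ∉ s) :
    ∃ K : Subgroup G, K.Normal ∧ K.FiniteIndex ∧ Disjoint (K : Set G) s := by
  have : Finite s := hs
  choose K h_normal h_index h_notMem using fun x : s ↦ hG x (ne_of_mem_of_not_mem x.2 h_one)
  refine ⟨⨅ x, K x, Subgroup.normal_iInf_normal h_normal, Subgroup.finiteIndex_iInf h_index, ?_⟩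
  exact Set.disjoint_left.2 fun g hgK hgs ↦
    h_notMem ⟨g, hgs⟩ (Subgroup.mem_iInf.1 hgK ⟨g, hgs⟩)

theorem of_surjective_of_finite_ker (hG : ResiduallyFinite G) {f : G →* H}
    (hf : Function.Surjective f) [Finite f.ker] : ResiduallyFinite H := by
  intro h h_ne_one
  have fiber_finite : (f ⁻¹' {h}).Finite :=
    Finite.of_equiv f.ker (f.fiberEquivKerOfSurjective hf h).symm
  have one_notMem_fiber : 1 ∉ f ⁻¹' {h} := fun h_one ↦ h_ne_one (h_one.symm.trans f.map_one)
  obtain ⟨K, h_normal, h_index, h_disjoint⟩ :=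
    hG.exists_normal_finiteIndex_disjoint fiber_finite one_notMem_fiber
  have map_index_ne_zero : (K.map f).index ≠ 0 :=
    ne_zero_of_dvd_ne_zero h_index.index_ne_zero (K.index_map_dvd hf)
  refine ⟨K.map f, h_normal.map f hf, ⟨map_index_ne_zero⟩, ?_⟩
  rintro ⟨k, hkK, hkh⟩
  exact Set.disjoint_left.1 h_disjoint hkK hkh

end ResiduallyFinite

/-- If `G` is residually finite and `N` is a finite normal subgroup of `G`, then `G ⧸ N` is
residually finite. -/
theorem residuallyFinite_quotient_of_finite_normal {G : Type*} [Group G]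
    (hG : ResiduallyFinite G) (N : Subgroup G) [N.Normal] (hN : Finite N) :
    ResiduallyFinite (G ⧸ N) := by
  have : Finite (QuotientGroup.mk' N).ker := by rwa [QuotientGroup.ker_mk']
  exact hG.of_surjective_of_finite_ker (QuotientGroup.mk'_surjective N)
end

section
/- Let φ : G → H be a group homomorphism whose kernel is finite and whose image has finite index in H. If G is residually finite, then H is residually finite. -/
/-!
A finite subset of a residually finite group that omits `1` is avoided by some finite-index
subgroup. If `φ` is surjective with finite kernel and `h ≠ 1`, then the fibre `φ ⁻¹' {h}` is such
a set, and the image of a finite-index subgroup avoiding it has finite index and omits `h`. Residual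
finiteness of the range of `φ` then passes to `H`, because finite-index subgroups of the range have
finite index in `H`.
-/

section

variable {G H : Type*} [Group G] [Group H]

theorem residuallyFinite_iff_groupResiduallyFinite :
    ResiduallyFinite G ↔ Group.ResiduallyFinite G := by
  rw [Group.residuallyFinite_iff_exists_finiteIndexNormalSubgroup]
  refine forall₂_congr fun g _ ↦ ⟨?_, ?_⟩
  · rintro ⟨N, _, _, hgN⟩
    exact ⟨.ofSubgroup N, hgN⟩
  · rintro ⟨N, hgN⟩
    exact ⟨N.toSubgroup, inferInstance, inferInstance, hgN⟩

theorem exists_finiteIndex_disjoint_of_finite [Group.ResiduallyFinite G] {S : Set G}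
    (hS : S.Finite) (one_notMem : 1 ∉ S) :
    ∃ N : Subgroup G, N.FiniteIndex ∧ Disjoint (N : Set G) S := by
  have separate (s : S) : ∃ N : Subgroup G, N.FiniteIndex ∧ (s : G) ∉ N :=
    Group.residuallyFinite_iff_exists_finiteIndex.mp ‹_› (s : G)
      (ne_of_mem_of_not_mem s.2 one_notMem)
  choose N hN notMem using separate
  have : Finite S := hS
  refine ⟨⨅ s, N s, Subgroup.finiteIndex_iInf hN, Set.disjoint_right.mpr fun s hs hsN ↦ ?_⟩
  exact notMem ⟨s, hs⟩ (Subgroup.mem_iInf.mp hsN ⟨s, hs⟩)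

theorem groupResiduallyFinite_of_surjective_of_finite_ker [Group.ResiduallyFinite G] {φ : G →* H}
    (hφ : Function.Surjective φ) [Finite φ.ker] : Group.ResiduallyFinite H := by
  refine Group.residuallyFinite_iff_exists_finiteIndex.mpr fun h hh ↦ ?_
  have fiber_finite : (φ ⁻¹' {h}).Finite :=
    Finite.of_equiv φ.ker (MonoidHom.fiberEquivKerOfSurjective hφ h).symm
  have one_notMem : 1 ∉ φ ⁻¹' {h} := fun h1 ↦ hh (h1.symm.trans φ.map_one)
  obtain ⟨N, hN, disjoint⟩ := exists_finiteIndex_disjoint_of_finite fiber_finite one_notMem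
  refine ⟨N.map φ, ⟨ne_zero_of_dvd_ne_zero hN.index_ne_zero (N.index_map_dvd hφ)⟩, ?_⟩
  rintro ⟨g, hgN, hg⟩
  exact Set.disjoint_left.mp disjoint hgN hg

theorem groupResiduallyFinite_of_finiteIndex (K : Subgroup H) [K.FiniteIndex]
    [Group.ResiduallyFinite K] : Group.ResiduallyFinite H := by
  refine Group.residuallyFinite_iff_forall_finiteIndex.mpr fun h hh ↦ ?_
  have eq_one : (⟨h, hh K⟩ : K) = 1 := by
    refine Group.residuallyFinite_iff_forall_finiteIndex.mp ‹_› _ fun L _ ↦ ?_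
    have : (L.map K.subtype).FiniteIndex := ⟨by
      rw [Subgroup.index_map_subtype]
      exact mul_ne_zero Subgroup.FiniteIndex.index_ne_zero Subgroup.FiniteIndex.index_ne_zero⟩
    exact (Subgroup.mem_map_iff_mem K.subtype_injective).mp (hh (L.map K.subtype))
  exact congrArg Subtype.val eq_one

end

/-- If `φ : G →* H` has finite kernel and finite-index image, and `G` is residually finite,
then `H` is residually finite. -/
theorem residuallyFinite_of_finite_kernel_finiteIndex_range {G H : Type*} [Group G] [Group H]
    (φ : G →* H) (hker : Finite φ.ker) (hrange : φ.range.FiniteIndex)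
    (hG : ResiduallyFinite G) : ResiduallyFinite H := by
  rw [residuallyFinite_iff_groupResiduallyFinite] at hG ⊢
  have : Finite φ.rangeRestrict.ker := by rwa [MonoidHom.ker_rangeRestrict]
  have : Group.ResiduallyFinite φ.range :=
    groupResiduallyFinite_of_surjective_of_finite_ker φ.rangeRestrict_surjective
  exact groupResiduallyFinite_of_finiteIndex φ.range
end

section
/- Let G be a residually finite group and let K be a finite normal subgroup of G. Then there exist a finite group F and a group homomorphism φ : G → F such that the homomorphism G → (G/K) × F sending g to (gK, φ(g)) is injective and its image is a subgroup of finite index in (G/K) × F. (In particular, G is commensurable with G/K: G is isomorphic to a finite-index subgroup of a group containing G/K as a finite-index subgroup.) -/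
/-!
Only the finitely many nontrivial elements of `K` have to be separated from `1`, so intersecting
finitely many finite-index normal subgroups gives one, `N`, that meets `K` trivially. Then
`G → G ⧸ K × G ⧸ N` is injective, and its image contains `N K ⧸ K × 1`, which has finite index.
-/

universe u

section

variable {G H F : Type*} [Group G] [Group H] [Group F]

theorem exists_normal_finiteIndex_disjoint {S : Set G} (hS : S.Finite)
    (hsep : ∀ g ∈ S, ∃ N : Subgroup G, N.Normal ∧ N.FiniteIndex ∧ g ∉ N) :
    ∃ N : Subgroup G, N.Normal ∧ N.FiniteIndex ∧ Disjoint S N := by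
  have := hS.to_subtype
  choose N hnormal hindex hnotMem using fun g : S ↦ hsep g g.2
  refine ⟨⨅ g, N g, Subgroup.normal_iInf_normal hnormal, Subgroup.finiteIndex_iInf hindex, ?_⟩
  exact Set.disjoint_left.2 fun g hgS hgN ↦ hnotMem ⟨g, hgS⟩ (Subgroup.mem_iInf.1 hgN ⟨g, hgS⟩)

theorem injective_prod_iff_disjoint_ker {M P : Type*} [MulOneClass M] [MulOneClass P]
    (f : G →* M) (φ : G →* P) : Function.Injective (f.prod φ) ↔ Disjoint f.ker φ.ker := by
  rw [← MonoidHom.ker_eq_bot_iff, MonoidHom.ker_prod, disjoint_iff]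

theorem map_ker_prod_bot_le_range_prod (f : G →* H) (φ : G →* F) :
    (φ.ker.map f).prod ⊥ ≤ (f.prod φ).range := by
  rintro ⟨_, _⟩ ⟨⟨g, hg, rfl⟩, rfl⟩
  exact ⟨g, Prod.ext rfl hg⟩

theorem finiteIndex_map (f : G →* H) [f.range.FiniteIndex] (L : Subgroup G) [L.FiniteIndex] :
    (L.map f).FiniteIndex := by
  have : (L ⊔ f.ker).FiniteIndex := Subgroup.finiteIndex_of_le le_sup_left
  rw [Subgroup.finiteIndex_iff, Subgroup.index_map]
  exact mul_ne_zero Subgroup.FiniteIndex.index_ne_zero Subgroup.FiniteIndex.index_ne_zero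

theorem finiteIndex_range_prod [Finite F] (f : G →* H) [f.range.FiniteIndex] (φ : G →* F) :
    (f.prod φ).range.FiniteIndex := by
  have hmap : (φ.ker.map f).FiniteIndex := finiteIndex_map f φ.ker
  have hprod : ((φ.ker.map f).prod (⊥ : Subgroup F)).FiniteIndex := by
    rw [Subgroup.finiteIndex_iff, Subgroup.index_prod]
    exact mul_ne_zero hmap.index_ne_zero Subgroup.FiniteIndex.index_ne_zero
  exact Subgroup.finiteIndex_of_le (map_ker_prod_bot_le_range_prod f φ)

end

theorem exists_injective_finiteIndex_into_quotient_prod_finite_general {G : Type u} [Group G]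
    (K : Subgroup G) [K.Normal] [Finite K]
    (hsep : ∀ k ∈ K, k ≠ 1 → ∃ N : Subgroup G, N.Normal ∧ N.FiniteIndex ∧ k ∉ N) :
    ∃ (F : Type u) (_ : Group F) (_ : Finite F) (φ : G →* F),
      Function.Injective ((QuotientGroup.mk' K).prod φ) ∧
      ((QuotientGroup.mk' K).prod φ).range.FiniteIndex := by
  obtain ⟨N, _, _, hdisj⟩ := exists_normal_finiteIndex_disjoint
    (S := (K : Set G) \ {1}) (Set.toFinite _).sdiff fun k hk ↦ hsep k hk.1 hk.2
  have hKN : Disjoint K N := Subgroup.disjoint_def.2 fun {g} hgK hgN ↦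
    by_contra fun hg ↦ Set.disjoint_left.1 hdisj ⟨hgK, hg⟩ hgN
  have : (QuotientGroup.mk' K).range.FiniteIndex := by
    rw [QuotientGroup.range_mk']
    infer_instance
  refine ⟨G ⧸ N, inferInstance, inferInstance, QuotientGroup.mk' N, ?_, finiteIndex_range_prod _ _⟩
  rwa [injective_prod_iff_disjoint_ker, QuotientGroup.ker_mk', QuotientGroup.ker_mk']

/-- If `G` is residually finite and `K` is a finite normal subgroup, then there is a finite group
`F` and a homomorphism `φ : G →* F` such that `g ↦ (gK, φ g)` is injective with finite-index
image in `(G ⧸ K) × F`; in particular `G` is commensurable with `G ⧸ K`. -/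
theorem exists_injective_finiteIndex_into_quotient_prod_finite {G : Type u} [Group G]
    (hG : ResiduallyFinite G) (K : Subgroup G) [K.Normal] (hK : Finite K) :
    ∃ (F : Type u) (_ : Group F) (_ : Finite F) (φ : G →* F),
      Function.Injective ((QuotientGroup.mk' K).prod φ) ∧
      ((QuotientGroup.mk' K).prod φ).range.FiniteIndex :=
  exists_injective_finiteIndex_into_quotient_prod_finite_general K fun k _ ↦ hG k
end

section
/- Let G be a finitely generated nilpotent group, let H be a subgroup of G, and let N be a normal subgroup of H of finite index in H. Then there exists a normal subgroup M of G of finite index in G such that H ∩ M ≤ N. -/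
/-!
Among the normal subgroups of `G` whose intersection with `H` lies in `N`, choose a maximal one `M`.
If `G ⧸ M` is infinite, its center contains an element `z` of infinite order. Either every element
of `H` that maps into `⟨z⟩` lies in `N`, or some `h ∈ H` maps to a nontrivial power of `z`; in the
second case a power `h ^ n` lies in `N`, and its image still generates a nontrivial central
subgroup. Either way a nontrivial normal subgroup of `G ⧸ M` pulls back into `N`, contradicting
maximality.

Replacing the inclusion of `H` by a homomorphism `f : H →* G` with kernel in `N` makes the passage
to `G ⧸ M` free: the composite `H →* G ⧸ M` has kernel `f⁻¹(M) ≤ N`.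

The element `z` exists because a finitely generated nilpotent group with torsion center is finite:
if `x` is central modulo the center, then `⁅x ^ n, g⁆ = ⁅x, g⁆ ^ n`, so some power of `x` commutes
with every generator; hence torsion passes to the center of `G ⧸ center G`, and induction on the
nilpotency class applies.
-/

open Subgroup
open scoped commutatorElement IsMulCommutative

section Center

variable {G : Type*} [Group G]

theorem commutatorElement_pow_left {x g : G} (h : Commute x ⁅x, g⁆) (n : ℕ) :
    ⁅x ^ n, g⁆ = ⁅x, g⁆ ^ n := by
  have hconj : ⁅x, g⁆ = x * (g * x⁻¹ * g⁻¹) := by group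
  have hcomm : Commute x (g * x⁻¹ * g⁻¹) := by
    simpa [hconj] using (Commute.refl x).inv_right.mul_right h
  rw [hconj, hcomm.mul_pow, conj_pow, commutatorElement_def, inv_pow]
  group

theorem exists_pow_mem_center [Group.FG G] {x : G} (hcomm : ∀ g : G, Commute x ⁅x, g⁆)
    (hfin : ∀ g : G, IsOfFinOrder ⁅x, g⁆) : ∃ n, 0 < n ∧ x ^ n ∈ center G := by
  obtain ⟨S, hS⟩ := Group.fg_def.1 ‹Group.FG G›
  refine ⟨∏ s ∈ S, orderOf ⁅x, s⁆, Finset.prod_pos fun s _ => (hfin s).orderOf_pos, ?_⟩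
  rw [center_eq_iInf hS]
  simp only [mem_iInf, mem_centralizer_singleton_iff]
  intro s hs
  have hdvd : orderOf ⁅x, s⁆ ∣ ∏ s ∈ S, orderOf ⁅x, s⁆ := Finset.dvd_prod_of_mem _ hs
  rw [← commutatorElement_eq_one_iff_mul_comm, commutatorElement_pow_left (hcomm s)]
  exact orderOf_dvd_iff_pow_eq_one.1 hdvd

theorem isOfFinOrder_of_mem_center_quotient_center [Group.FG G]
    (hcenter : ∀ z ∈ center G, IsOfFinOrder z) {y : G ⧸ center G}
    (hy : y ∈ center (G ⧸ center G)) : IsOfFinOrder y := by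
  obtain ⟨x, rfl⟩ := QuotientGroup.mk_surjective y
  have hx : x ∈ (center G).upperCentralSeriesStep := by
    rwa [Subgroup.upperCentralSeriesStep_eq_comap_center]
  obtain ⟨n, hn, hxn⟩ :=
    exists_pow_mem_center (fun g => mem_center_iff.1 (hx g) x) fun g => hcenter _ (hx g)
  exact isOfFinOrder_iff_pow_eq_one.2 ⟨n, hn, (QuotientGroup.eq_one_iff _).2 hxn⟩

theorem finite_center_of_forall_isOfFinOrder [Group.FG G] [Finite (G ⧸ center G)]
    (hcenter : ∀ z ∈ center G, IsOfFinOrder z) : Finite (center G) := by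
  have : (center G).FiniteIndex := finiteIndex_of_finite_quotient
  exact CommGroup.finite_of_fg_isMulTorsion (center G) fun z =>
    Submonoid.isOfFinOrder_coe.1 (hcenter z z.2)

end Center

theorem finite_of_forall_mem_center_isOfFinOrder {G : Type*} [Group G] [Group.FG G]
    [Group.IsNilpotent G] (hcenter : ∀ z ∈ center G, IsOfFinOrder z) : Finite G := by
  refine Group.nilpotent_center_quotient_ind (P := fun G _ _ =>
    Group.FG G → (∀ z ∈ center G, IsOfFinOrder z) → Finite G) G ?_ ?_ ‹_› hcenter
  · intros
    infer_instance
  · intro G _ _ ih _ hcenter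
    have : Finite (G ⧸ center G) :=
      ih inferInstance fun _ hy => isOfFinOrder_of_mem_center_quotient_center hcenter hy
    have : Finite (center G) := finite_center_of_forall_isOfFinOrder hcenter
    exact Finite.of_subgroup_quotient (center G)

theorem normal_zpowers_of_mem_center {G : Type*} [Group G] {z : G} (hz : z ∈ center G) :
    (zpowers z).Normal where
  conj_mem y hy g := by
    have hyz : y ∈ center G := zpowers_le.2 hz hy
    rwa [mem_center_iff.1 hyz g, mul_inv_cancel_right]

theorem not_isOfFinOrder_of_mem_zpowers {G : Type*} [Group G] {y z : G} (hz : ¬IsOfFinOrder z)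
    (hy : y ∈ zpowers z) (hy1 : y ≠ 1) : ¬IsOfFinOrder y := by
  obtain ⟨k, rfl⟩ := mem_zpowers_iff.1 hy
  intro hfin
  obtain ⟨m, hm, hpow⟩ := isOfFinOrder_iff_zpow_eq_one.1 hfin
  have hk : k ≠ 0 := by
    rintro rfl
    exact hy1 (zpow_zero z)
  exact hz (isOfFinOrder_iff_zpow_eq_one.2 ⟨k * m, mul_ne_zero hk hm, by rwa [zpow_mul]⟩)

section Comap

variable {G H : Type*} [Group G] [Group H]

theorem exists_normal_ne_bot_comap_le {f : H →* G} {N : Subgroup H} (hker : f.ker ≤ N)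
    (hpow : ∀ h, ∃ n, 0 < n ∧ h ^ n ∈ N) {z : G} (hz : z ∈ center G) (hinf : ¬IsOfFinOrder z) :
    ∃ P : Subgroup G, P.Normal ∧ P ≠ ⊥ ∧ P.comap f ≤ N := by
  by_cases hle : (zpowers z).comap f ≤ N
  · refine ⟨zpowers z, normal_zpowers_of_mem_center hz, fun hbot => hinf ?_, hle⟩
    rw [zpowers_eq_bot.1 hbot]
    exact IsOfFinOrder.one
  obtain ⟨h, hhz, hhN⟩ := SetLike.not_le_iff_exists.1 hle
  obtain ⟨n, hn, hnN⟩ := hpow h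
  have hfh : ¬IsOfFinOrder (f h) :=
    not_isOfFinOrder_of_mem_zpowers hinf hhz fun h1 => hhN (hker h1)
  refine ⟨zpowers (f (h ^ n)), normal_zpowers_of_mem_center ?_, ?_, ?_⟩
  · rw [map_pow]
    exact pow_mem (zpowers_le.2 hz hhz) n
  · rw [Ne, zpowers_eq_bot, map_pow]
    exact fun heq => hfh (isOfFinOrder_iff_pow_eq_one.2 ⟨n, hn, heq⟩)
  · rw [← MonoidHom.map_zpowers, comap_map_eq]
    exact sup_le (zpowers_le.2 hnN) hker

theorem exists_maximal_normal_comap_le {f : H →* G} {N : Subgroup H} (hker : f.ker ≤ N) :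
    ∃ M : Subgroup G, Maximal (fun K => K.Normal ∧ K.comap f ≤ N) M := by
  have hchain_bound : ∀ c ⊆ {K : Subgroup G | K.Normal ∧ K.comap f ≤ N}, IsChain (· ≤ ·) c →
      ∀ K ∈ c, ∃ B ∈ {K : Subgroup G | K.Normal ∧ K.comap f ≤ N}, ∀ L ∈ c, L ≤ B := by
    intro c hc hchain K hK
    refine ⟨sSup c, ⟨sSup_normal c fun L hL => (hc hL).1, fun h hh => ?_⟩, fun L => le_sSup⟩
    obtain ⟨L, hL, hhL⟩ := (mem_sSup_of_directedOn ⟨K, hK⟩ hchain.directedOn).1 hh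
    exact (hc hL).2 hhL
  obtain ⟨M, -, hM⟩ := zorn_le_nonempty₀ _ hchain_bound ⊥ ⟨inferInstance, hker⟩
  exact ⟨M, hM⟩

end Comap

theorem exists_finiteIndex_normal_subgroupOf_le_general {G H : Type*} [Group G] [Group H]
    [Group.FG G] [Group.IsNilpotent G] (f : H →* G) (N : Subgroup H) (hker : f.ker ≤ N)
    (hpow : ∀ h, ∃ n, 0 < n ∧ h ^ n ∈ N) :
    ∃ M : Subgroup G, M.Normal ∧ M.FiniteIndex ∧ M.comap f ≤ N := by
  obtain ⟨M, ⟨hMnormal, hMN⟩, hMmax⟩ := exists_maximal_normal_comap_le hker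
  suffices Finite (G ⧸ M) from ⟨M, hMnormal, finiteIndex_of_finite_quotient, hMN⟩
  refine finite_of_forall_mem_center_isOfFinOrder fun z hz => ?_
  by_contra hinf
  have hker' : ((QuotientGroup.mk' M).comp f).ker ≤ N := by
    rwa [← MonoidHom.comap_ker, QuotientGroup.ker_mk']
  obtain ⟨P, hPnormal, hPbot, hPN⟩ := exists_normal_ne_bot_comap_le hker' hpow hz hinf
  rw [← comap_comap] at hPN
  have hPM : P.comap (QuotientGroup.mk' M) ≤ M :=
    hMmax ⟨inferInstance, hPN⟩ (QuotientGroup.le_comap_mk' M P)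
  refine hPbot (eq_bot_iff.2 ?_)
  rw [← map_comap_eq_self_of_surjective (QuotientGroup.mk'_surjective M) P]
  exact (map_mono hPM).trans (QuotientGroup.map_mk'_self M).le

/-- In a finitely generated nilpotent group `G`, every finite-index normal subgroup `N` of a
subgroup `H` contains the intersection of `H` with some finite-index normal subgroup `M`
of `G`. -/
theorem exists_finiteIndex_normal_subgroupOf_le {G : Type*} [Group G]
    (hfg : Group.FG G) (hnil : Group.IsNilpotent G)
    (H : Subgroup G) (N : Subgroup H) (hNn : N.Normal) (hNf : N.FiniteIndex) :
    ∃ M : Subgroup G, M.Normal ∧ M.FiniteIndex ∧ M.subgroupOf H ≤ N :=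
  exists_finiteIndex_normal_subgroupOf_le_general H.subtype N (by simp) fun h =>
    (exists_pow_mem_of_index_ne_zero hNf.index_ne_zero h).imp fun _ hn => ⟨hn.1, hn.2.2⟩
end
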